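/- Let γ̄ > 0, m > 0, K ≥ 0, 0 ≤ Δ ≤ 1, s ∈ ℝ and z ≥ 0. Then the lower incomplete moment generating function of the FTR model satisfies ∫₀^z exp(sx) f_FTR(x; γ̄, m, K, Δ) dx = (1/π) ∫₀^π ( m^m (1+K) z / ( γ̄ (m + K(1+Δcos θ))^m ) ) · Φ₂( 1−m, m; 2; (s − (1+K)/γ̄) z, (s − m(1+K)/(γ̄(m + K(1+Δcos θ)))) z ) dθ. -/

import Mathlib

/-!
Put `p = s - (1 + K)/g` and `q = s - m(1 + K)/(g A(θ))` with `A(θ) = m + K(1 + Δ cos θ) > 0`. For a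
fixed angle the integrand is a constant times `e^{px} ₁F₁(m; 1; (q - p)x)`, which equals
`Φ₂(1 - m, m; 1; px, qx)` (`hasSum_kummer`). Comparing the parts of equal total degree reduces this
identity to the Chu–Vandermonde sum `poch_vandermonde`. Integrating the `Φ₂` series termwise over
`[0, z]` replaces `(1)_n = n!` by `(2)_n = (n + 1)!` and contributes a factor `z`
(`integral_exp_mul_hyp1F1`). Since the integrand is jointly continuous in `(x, θ)`, Fubini's theorem
lets the integral over `x` be taken first.
-/

open MeasureTheory Real

/-- Pochhammer symbol (ascending factorial) `(a)_k`. -/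
noncomputable def poch (a : ℝ) (k : ℕ) : ℝ := ∏ i ∈ Finset.range k, (a + i)

/-- Confluent hypergeometric function `₁F₁(a; 1; z)`. -/
noncomputable def hyp1F1 (a z : ℝ) : ℝ := ∑' k : ℕ, poch a k * z ^ k / ((Nat.factorial k : ℝ)) ^ 2

/-- The FTR density `f_FTR(x; γ̄, m, K, Δ)`. -/
noncomputable def fFTR (g m K Δ x : ℝ) : ℝ :=
  (1 / π) * ∫ θ in (0 : ℝ)..π,
    (m / (m + K * (1 + Δ * Real.cos θ))) ^ m * ((1 + K) / g) * Real.exp (-(1 + K) * x / g) *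
      hyp1F1 m (K * (1 + K) * (1 + Δ * Real.cos θ) * x / (g * (m + K * (1 + Δ * Real.cos θ))))

/-- Bivariate confluent hypergeometric function `Φ₂(b₁, b₂; c; x, y)`. -/
noncomputable def Phi2 (b₁ b₂ c x y : ℝ) : ℝ :=
  ∑' p : ℕ × ℕ, poch b₁ p.1 * poch b₂ p.2 * x ^ p.1 * y ^ p.2 /
    (poch c (p.1 + p.2) * (Nat.factorial p.1 : ℝ) * (Nat.factorial p.2 : ℝ))

lemma poch_succ (a : ℝ) (k : ℕ) : poch a (k + 1) = poch a k * (a + k) := by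
  simp [poch, Finset.prod_range_succ]

lemma poch_zero (a : ℝ) : poch a 0 = 1 := by simp [poch]

lemma poch_add (a : ℝ) (i l : ℕ) : poch a (i + l) = poch a i * poch (a + i) l := by
  simp only [poch, Finset.prod_range_add]
  congr 1
  refine Finset.prod_congr rfl fun x _ => ?_
  push_cast
  ring

lemma poch_one_add (i N : ℕ) : poch (1 + i) N * (i.factorial : ℝ) = ((i + N).factorial : ℝ) := by
  induction N with
  | zero => simp [poch_zero]
  | succ N ih =>
    rw [poch_succ, ← add_assoc, Nat.factorial_succ]
    push_cast
    rw [← ih]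
    ring

lemma poch_two (n : ℕ) : poch 2 n = (n.factorial : ℝ) * (n + 1) := by
  have h := poch_one_add 1 n
  rw [add_comm 1 n, Nat.factorial_succ] at h
  norm_num at h
  rw [h, Nat.factorial_succ]
  push_cast
  ring

/-- The growth bound that makes every series below converge absolutely. -/
lemma abs_poch_le (a : ℝ) (k : ℕ) : |poch a k| ≤ (k.factorial : ℝ) * (1 + |a|) ^ k := by
  induction k with
  | zero => simp [poch_zero]
  | succ k ih =>
    rw [poch_succ, abs_mul, Nat.factorial_succ, pow_succ]
    push_cast
    have h1 : |a + k| ≤ (k + 1) * (1 + |a|) := by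
      have := abs_add_le a (k : ℝ)
      rw [Nat.abs_cast] at this
      have h2 : 0 ≤ (k : ℝ) * |a| := by positivity
      nlinarith
    calc |poch a k| * |a + k| ≤ ((k.factorial : ℝ) * (1 + |a|) ^ k) * ((k + 1) * (1 + |a|)) := by
          gcongr
      _ = _ := by ring

/-- Chu–Vandermonde for ascending factorials. The induction uses that `j + l = N + 1` turns
`N + 1` into `j + l` inside the sum, each part of which lowers one of the two indices. -/
lemma poch_vandermonde (a b : ℝ) (N : ℕ) :
    ∑ p ∈ Finset.HasAntidiagonal.antidiagonal N,
      (poch a p.1 / (p.1.factorial : ℝ)) * (poch b p.2 / (p.2.factorial : ℝ)) =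
      poch (a + b) N / (N.factorial : ℝ) := by
  have hu : ∀ (a : ℝ) (k : ℕ), ((k : ℝ) + 1) * (poch a (k + 1) / ((k + 1).factorial : ℝ)) =
      (a + k) * (poch a k / (k.factorial : ℝ)) := by
    intro a k
    rw [poch_succ, Nat.factorial_succ]
    have : (k.factorial : ℝ) ≠ 0 := by positivity
    push_cast
    field_simp
  induction N with
  | zero => simp [poch_zero]
  | succ N ih =>
    have hN : ((N : ℝ) + 1) ≠ 0 := by positivity
    apply mul_left_cancel₀ hN
    rw [hu, ← ih, Finset.mul_sum]
    have h1 : ∀ p ∈ Finset.HasAntidiagonal.antidiagonal (N + 1),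
        ((N : ℝ) + 1) * ((poch a p.1 / (p.1.factorial : ℝ)) * (poch b p.2 / (p.2.factorial : ℝ))) =
        ((p.1 : ℝ) * (poch a p.1 / (p.1.factorial : ℝ))) * (poch b p.2 / (p.2.factorial : ℝ)) +
        (poch a p.1 / (p.1.factorial : ℝ)) * ((p.2 : ℝ) * (poch b p.2 / (p.2.factorial : ℝ))) := by
      intro p hp
      rw [Finset.HasAntidiagonal.mem_antidiagonal] at hp
      have : (p.1 : ℝ) + p.2 = N + 1 := by exact_mod_cast hp
      rw [← this]
      ring
    rw [Finset.sum_congr rfl h1, Finset.sum_add_distrib, Finset.Nat.sum_antidiagonal_succ,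
      Finset.Nat.sum_antidiagonal_succ']
    simp only [Nat.cast_zero, zero_mul, mul_zero, zero_add, Nat.cast_add, Nat.cast_one,
      hu]
    rw [← Finset.sum_add_distrib, Finset.mul_sum]
    refine Finset.sum_congr rfl fun p hp => ?_
    rw [Finset.HasAntidiagonal.mem_antidiagonal] at hp
    have : (p.1 : ℝ) + p.2 = N := by exact_mod_cast hp
    rw [← this]
    ring

/-- The part of total degree `n` of `e^X ₁F₁(m; 1; D) = Φ₂(1 - m, m; 1; X, X + D)`. After expanding
`(X + D)^k` and collecting powers of `D`, the inner sums are Chu–Vandermonde sums with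
`(1 - m) + (m + i) = 1 + i`. -/
lemma kummer_homogeneous (m X D : ℝ) (n : ℕ) :
    ∑ p ∈ Finset.HasAntidiagonal.antidiagonal n,
      X ^ p.1 / (p.1.factorial : ℝ) * (poch m p.2 * D ^ p.2 / (p.2.factorial : ℝ) ^ 2) =
    ∑ p ∈ Finset.HasAntidiagonal.antidiagonal n, poch (1 - m) p.1 * poch m p.2 * X ^ p.1 * (X + D) ^ p.2 /
      (((p.1 + p.2).factorial : ℝ) * (p.1.factorial : ℝ) * (p.2.factorial : ℝ)) := by
  have hL : ∀ p ∈ Finset.HasAntidiagonal.antidiagonal n,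
      X ^ p.1 / (p.1.factorial : ℝ) * (poch m p.2 * D ^ p.2 / (p.2.factorial : ℝ) ^ 2) =
      ∑ r ∈ Finset.HasAntidiagonal.antidiagonal p.1, X ^ p.1 * D ^ p.2 / (n.factorial : ℝ) *
        (poch m p.2 / (p.2.factorial : ℝ)) *
        ((poch (1 - m) r.1 / (r.1.factorial : ℝ)) *
          (poch (m + p.2) r.2 / (r.2.factorial : ℝ))) := by
    intro p hp
    rw [Finset.HasAntidiagonal.mem_antidiagonal] at hp
    rw [← Finset.mul_sum, poch_vandermonde, show 1 - m + (m + (p.2 : ℝ)) = 1 + p.2 by ring]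
    have h := poch_one_add p.2 p.1
    rw [add_comm p.2 p.1, hp] at h
    have h1 : (p.1.factorial : ℝ) ≠ 0 := by positivity
    have h2 : (p.2.factorial : ℝ) ≠ 0 := by positivity
    have h3 : (n.factorial : ℝ) ≠ 0 := by positivity
    field_simp
    rw [← h]
    ring
  have hR : ∀ p ∈ Finset.HasAntidiagonal.antidiagonal n,
      poch (1 - m) p.1 * poch m p.2 * X ^ p.1 * (X + D) ^ p.2 /
      (((p.1 + p.2).factorial : ℝ) * (p.1.factorial : ℝ) * (p.2.factorial : ℝ)) =
      ∑ r ∈ Finset.HasAntidiagonal.antidiagonal p.2, X ^ (p.1 + r.1) * D ^ r.2 / (n.factorial : ℝ) *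
        (poch m r.2 / (r.2.factorial : ℝ)) *
        ((poch (1 - m) p.1 / (p.1.factorial : ℝ)) *
          (poch (m + r.2) r.1 / (r.1.factorial : ℝ))) := by
    intro p hp
    rw [Finset.HasAntidiagonal.mem_antidiagonal] at hp
    rw [hp, (Commute.all X D).add_pow', Finset.mul_sum, Finset.sum_div]
    refine Finset.sum_congr rfl fun r hr => ?_
    rw [Finset.HasAntidiagonal.mem_antidiagonal] at hr
    have hp2 : poch m p.2 = poch m r.2 * poch (m + r.2) r.1 := by
      rw [← poch_add, add_comm, hr]
    have hc : (p.2.choose r.1 : ℝ) * r.1.factorial * r.2.factorial = p.2.factorial := by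
      rw [← hr]
      rw [Nat.choose_symm_add]
      exact_mod_cast Nat.add_choose_mul_factorial_mul_factorial r.1 r.2
    have h1 : (r.1.factorial : ℝ) ≠ 0 := by positivity
    have h2 : (r.2.factorial : ℝ) ≠ 0 := by positivity
    have h3 : (n.factorial : ℝ) ≠ 0 := by positivity
    have h4 : (p.1.factorial : ℝ) ≠ 0 := by positivity
    have h5 : (p.2.factorial : ℝ) ≠ 0 := by positivity
    rw [hp2, nsmul_eq_mul, pow_add]
    field_simp
    rw [← hc]
    ring
  rw [Finset.sum_congr rfl hL, Finset.sum_congr rfl hR, Finset.sum_sigma', Finset.sum_sigma']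
  refine Finset.sum_bij'
    (fun a _ => ⟨(a.2.1, a.2.2 + a.1.2), (a.2.2, a.1.2)⟩)
    (fun a _ => ⟨(a.1.1 + a.2.1, a.2.2), (a.1.1, a.2.1)⟩) ?_ ?_ ?_ ?_ ?_
  · rintro ⟨⟨a, b⟩, ⟨c, d⟩⟩ h
    simp only [Finset.mem_sigma, Finset.HasAntidiagonal.mem_antidiagonal] at h ⊢
    exact ⟨show c + (d + b) = n by omega, trivial⟩
  · rintro ⟨⟨a, b⟩, ⟨c, d⟩⟩ h
    simp only [Finset.mem_sigma, Finset.HasAntidiagonal.mem_antidiagonal] at h ⊢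
    exact ⟨show a + c + d = n by omega, trivial⟩
  · rintro ⟨⟨a, b⟩, ⟨c, d⟩⟩ h
    simp only [Finset.mem_sigma, Finset.HasAntidiagonal.mem_antidiagonal] at h ⊢
    obtain ⟨_, rfl⟩ := h
    rfl
  · rintro ⟨⟨a, b⟩, ⟨c, d⟩⟩ h
    simp only [Finset.mem_sigma, Finset.HasAntidiagonal.mem_antidiagonal] at h ⊢
    obtain ⟨_, rfl⟩ := h
    rfl
  · rintro ⟨⟨a, b⟩, ⟨c, d⟩⟩ h
    simp only [Finset.mem_sigma, Finset.HasAntidiagonal.mem_antidiagonal] at h ⊢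
    obtain ⟨_, rfl⟩ := h
    rfl

lemma norm_hyp1F1_term_le (a z R : ℝ) (hz : |z| ≤ R) (k : ℕ) :
    ‖poch a k * z ^ k / ((Nat.factorial k : ℝ)) ^ 2‖ ≤
      ((1 + |a|) * R) ^ k / (k.factorial : ℝ) := by
  have h1 : (0 : ℝ) < k.factorial := by positivity
  rw [Real.norm_eq_abs, abs_div, abs_mul, abs_pow, abs_of_pos (pow_pos h1 2), div_le_div_iff₀
    (by positivity) h1, mul_pow]
  calc |poch a k| * |z| ^ k * k.factorial
      ≤ (k.factorial * (1 + |a|) ^ k) * R ^ k * k.factorial := by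
        gcongr
        exact abs_poch_le a k
    _ = _ := by ring

lemma continuous_hyp1F1 (a : ℝ) : Continuous (hyp1F1 a) := by
  rw [continuous_iff_continuousAt]
  intro z₀
  have h : ContinuousOn (hyp1F1 a) (Metric.ball 0 (|z₀| + 1)) := by
    refine continuousOn_tsum (u := fun k : ℕ => ((1 + |a|) * (|z₀| + 1)) ^ k / (k.factorial : ℝ))
      (fun k => by fun_prop) (Real.summable_pow_div_factorial _) ?_
    intro k x hx
    refine norm_hyp1F1_term_le a x _ ?_ k
    have hx' : |x| < |z₀| + 1 := by simpa using hx
    exact hx'.le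
  refine h.continuousAt (Metric.isOpen_ball.mem_nhds ?_)
  simp

lemma summable_norm_Phi2_one (b₁ b₂ x y : ℝ) :
    Summable fun p : ℕ × ℕ => ‖poch b₁ p.1 * poch b₂ p.2 * x ^ p.1 * y ^ p.2 /
      (((p.1 + p.2).factorial : ℝ) * (p.1.factorial : ℝ) * (p.2.factorial : ℝ))‖ := by
  have hs := (Real.summable_pow_div_factorial ((1 + |b₁|) * |x|)).mul_of_nonneg
    (Real.summable_pow_div_factorial ((1 + |b₂|) * |y|))
    (fun k => by positivity) (fun k => by positivity)
  refine Summable.of_nonneg_of_le (fun _ => norm_nonneg _) ?_ hs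
  rintro ⟨j, k⟩
  have h1 : (0 : ℝ) < j.factorial := by positivity
  have h2 : (0 : ℝ) < k.factorial := by positivity
  have h3 : (j.factorial : ℝ) * k.factorial ≤ (j + k).factorial := by
    exact_mod_cast Nat.le_of_dvd (Nat.factorial_pos _)
      (Nat.factorial_mul_factorial_dvd_factorial_add j k)
  have h4 : (0 : ℝ) < (j + k).factorial := by positivity
  simp only [Real.norm_eq_abs, abs_div, abs_mul, abs_pow, Nat.abs_cast]
  rw [div_mul_div_comm, div_le_div_iff₀ (by positivity) (by positivity)]
  calc |poch b₁ j| * |poch b₂ k| * |x| ^ j * |y| ^ k * (j.factorial * k.factorial)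
      ≤ (j.factorial * (1 + |b₁|) ^ j) * (k.factorial * (1 + |b₂|) ^ k) * |x| ^ j * |y| ^ k *
        (j + k).factorial := by
        gcongr
        · exact abs_poch_le _ _
        · exact abs_poch_le _ _
    _ = _ := by
        rw [mul_pow, mul_pow]
        ring

/-- The identity `e^X ₁F₁(m; 1; D) = Φ₂(1 - m, m; 1; X, X + D)`. -/
lemma hasSum_kummer (m X D : ℝ) :
    HasSum (fun p : ℕ × ℕ => poch (1 - m) p.1 * poch m p.2 * X ^ p.1 * (X + D) ^ p.2 /
      (((p.1 + p.2).factorial : ℝ) * (p.1.factorial : ℝ) * (p.2.factorial : ℝ)))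
      (Real.exp X * hyp1F1 m D) := by
  have hs := (summable_norm_Phi2_one (1 - m) m X (X + D)).of_norm
  have hexp : Real.exp X = ∑' n : ℕ, X ^ n / (n.factorial : ℝ) := by
    rw [Real.exp_eq_exp_ℝ, NormedSpace.exp_eq_tsum_div]
  have hX : Summable fun n : ℕ => ‖X ^ n / (n.factorial : ℝ)‖ :=
    (Real.summable_pow_div_factorial X).norm
  have hD : Summable fun k : ℕ => ‖poch m k * D ^ k / ((Nat.factorial k : ℝ)) ^ 2‖ :=
    Summable.of_nonneg_of_le (fun _ => norm_nonneg _) (norm_hyp1F1_term_le m D |D| le_rfl)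
      (Real.summable_pow_div_factorial _)
  rw [hs.hasSum_iff, hexp, hyp1F1,
    tsum_mul_tsum_eq_tsum_sum_antidiagonal_of_summable_norm hX hD,
    ← Finset.HasAntidiagonal.sigmaAntidiagonalEquivProd.tsum_eq]
  refine (Summable.tsum_sigma' (fun n => (hasSum_fintype _).summable)
    (Finset.HasAntidiagonal.sigmaAntidiagonalEquivProd.summable_iff.mpr hs)).trans ?_
  refine tsum_congr fun n => ?_
  rw [kummer_homogeneous, tsum_fintype]
  exact Finset.sum_coe_sort (Finset.HasAntidiagonal.antidiagonal n) fun p : ℕ × ℕ =>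
    poch (1 - m) p.1 * poch m p.2 * X ^ p.1 * (X + D) ^ p.2 /
      (((p.1 + p.2).factorial : ℝ) * (p.1.factorial : ℝ) * (p.2.factorial : ℝ))

/-- The integral for a fixed angle, obtained by integrating `Φ₂(1 - m, m; 1; px, qx)` termwise. -/
lemma integral_exp_mul_hyp1F1 (m p q z : ℝ) :
    ∫ x in (0 : ℝ)..z, Real.exp (p * x) * hyp1F1 m ((q - p) * x) =
      z * Phi2 (1 - m) m 2 (p * z) (q * z) := by
  set T : ℕ × ℕ → ℝ → ℝ := fun r x => poch (1 - m) r.1 * poch m r.2 * (p * x) ^ r.1 *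
    (q * x) ^ r.2 / (((r.1 + r.2).factorial : ℝ) * (r.1.factorial : ℝ) * (r.2.factorial : ℝ))
    with hT
  have key : HasSum (fun r => ∫ x in (0 : ℝ)..z, T r x)
      (∫ x in (0 : ℝ)..z, Real.exp (p * x) * hyp1F1 m ((q - p) * x)) := by
    refine intervalIntegral.hasSum_integral_of_dominated_convergence (fun r _ => ‖T r z‖)
      ?_ ?_ ?_ ?_ ?_
    · intro r
      exact Continuous.aestronglyMeasurable (by fun_prop)
    · intro r
      refine Filter.Eventually.of_forall fun x hx => ?_
      have hxz : |x| ≤ |z| := by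
        rcases Set.mem_uIoc.mp hx with h | h
        · rw [abs_of_pos h.1, abs_of_nonneg (h.1.le.trans h.2)]
          exact h.2
        · rw [abs_of_nonpos h.2, abs_of_neg (h.1.trans_le h.2)]
          linarith
      simp only [hT, Real.norm_eq_abs, abs_div, abs_mul, abs_pow]
      gcongr
    · exact Filter.Eventually.of_forall fun x _ => summable_norm_Phi2_one _ _ _ _
    · exact intervalIntegrable_const
    · refine Filter.Eventually.of_forall fun x _ => ?_
      have h := hasSum_kummer m (p * x) ((q - p) * x)
      rwa [show p * x + (q - p) * x = q * x by ring] at h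
  rw [← key.tsum_eq, Phi2, ← tsum_mul_left]
  refine tsum_congr fun r => ?_
  have hr : ∀ x, T r x = (poch (1 - m) r.1 * poch m r.2 * p ^ r.1 * q ^ r.2 /
      (((r.1 + r.2).factorial : ℝ) * (r.1.factorial : ℝ) * (r.2.factorial : ℝ))) *
      x ^ (r.1 + r.2) := by
    intro x
    simp only [hT, mul_pow, pow_add]
    ring
  simp only [hr]
  rw [intervalIntegral.integral_const_mul, integral_pow, poch_two]
  simp only [mul_pow, pow_succ, pow_add]
  have h1 : (r.1.factorial : ℝ) ≠ 0 := by positivity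
  have h2 : (r.2.factorial : ℝ) ≠ 0 := by positivity
  have h3 : ((r.1 + r.2).factorial : ℝ) ≠ 0 := by positivity
  have h4 : ((r.1 : ℝ) + r.2 + 1) ≠ 0 := by positivity
  push_cast
  field_simp
  ring

theorem stmt7 (g m K Δ s z : ℝ) (hg : 0 < g) (hm : 0 < m) (hK : 0 ≤ K)
    (hΔ0 : 0 ≤ Δ) (hΔ1 : Δ ≤ 1) (hz : 0 ≤ z) :
    ∫ x in (0 : ℝ)..z, Real.exp (s * x) * fFTR g m K Δ x =
      (1 / π) * ∫ θ in (0 : ℝ)..π,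
        (m ^ m * (1 + K) * z / (g * (m + K * (1 + Δ * Real.cos θ)) ^ m)) *
          Phi2 (1 - m) m 2 ((s - (1 + K) / g) * z)
            ((s - m * (1 + K) / (g * (m + K * (1 + Δ * Real.cos θ)))) * z) := by
  have hA : ∀ θ : ℝ, 0 < m + K * (1 + Δ * Real.cos θ) := by
    intro θ
    have h1 : 0 ≤ 1 + Δ * Real.cos θ := by nlinarith [Real.neg_one_le_cos θ]
    positivity
  set F : ℝ → ℝ → ℝ := fun x θ => Real.exp (s * x) *
    ((m / (m + K * (1 + Δ * Real.cos θ))) ^ m * ((1 + K) / g) * Real.exp (-(1 + K) * x / g) *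
      hyp1F1 m (K * (1 + K) * (1 + Δ * Real.cos θ) * x / (g * (m + K * (1 + Δ * Real.cos θ)))))
    with hF
  have hcont : Continuous F.uncurry := by
    have hh := continuous_hyp1F1 m
    have hb : Continuous fun y : ℝ × ℝ => (m / (m + K * (1 + Δ * Real.cos y.2))) ^ m := by
      refine Continuous.rpow_const ?_ fun _ => Or.inr hm.le
      exact continuous_const.div (by fun_prop) fun y => (hA y.2).ne'
    have ha : Continuous fun y : ℝ × ℝ => K * (1 + K) * (1 + Δ * Real.cos y.2) * y.1 /
        (g * (m + K * (1 + Δ * Real.cos y.2))) :=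
      Continuous.div (by fun_prop) (by fun_prop) fun y => (mul_pos hg (hA y.2)).ne'
    have hc := hh.comp ha
    have he : Continuous fun y : ℝ × ℝ => Real.exp (s * y.1) := by fun_prop
    have he' : Continuous fun y : ℝ × ℝ => Real.exp (-(1 + K) * y.1 / g) := by fun_prop
    exact he.mul (((hb.mul continuous_const).mul he').mul hc)
  have hint : IntegrableOn F.uncurry (Set.uIoc 0 z ×ˢ Set.uIoc 0 π) :=
    (hcont.continuousOn.integrableOn_compact (isCompact_uIcc.prod isCompact_uIcc)).mono_set
      (Set.prod_mono Set.uIoc_subset_uIcc Set.uIoc_subset_uIcc)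
  calc ∫ x in (0 : ℝ)..z, Real.exp (s * x) * fFTR g m K Δ x
      = ∫ x in (0 : ℝ)..z, (1 / π) * ∫ θ in (0 : ℝ)..π, F x θ := by
        refine intervalIntegral.integral_congr fun x _ => ?_
        simp only [fFTR, hF]
        rw [intervalIntegral.integral_const_mul]
        ring
    _ = (1 / π) * ∫ θ in (0 : ℝ)..π, ∫ x in (0 : ℝ)..z, F x θ := by
        rw [intervalIntegral.integral_const_mul, intervalIntegral_intervalIntegral_swap hint]
    _ = _ := by
        congr 1
        refine intervalIntegral.integral_congr fun θ _ => ?_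
        set A := m + K * (1 + Δ * Real.cos θ) with hAdef
        have hApos : 0 < A := hA θ
        have hx : ∀ x, F x θ = ((m / A) ^ m * ((1 + K) / g)) *
            (Real.exp ((s - (1 + K) / g) * x) *
              hyp1F1 m ((s - m * (1 + K) / (g * A) - (s - (1 + K) / g)) * x)) := by
          intro x
          have e1 : (s - (1 + K) / g) * x = s * x + -(1 + K) * x / g := by ring
          have e2 : (s - m * (1 + K) / (g * A) - (s - (1 + K) / g)) * x =
              K * (1 + K) * (1 + Δ * Real.cos θ) * x / (g * A) := by
            have e3 : K * (1 + Δ * Real.cos θ) = A - m := by rw [hAdef]; ring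
            rw [show K * (1 + K) * (1 + Δ * Real.cos θ) * x =
              (K * (1 + Δ * Real.cos θ)) * (1 + K) * x by ring, e3]
            field_simp
            ring
          rw [e1, e2, Real.exp_add]
          simp only [hF, ← hAdef]
          ring
        simp only [hx]
        rw [intervalIntegral.integral_const_mul, integral_exp_mul_hyp1F1,
          Real.div_rpow hm.le hApos.le]
        have : A ^ m ≠ 0 := (Real.rpow_pos_of_pos hApos m).ne'
        field_simp
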